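/- arXiv:1110.5038 — 2 statements merged into one kernel-verified Lean document; each statement's English description precedes it below -/
import Mathlib

section
/- Let 0 ≤ s_1 ≤ ... ≤ s_t ≤ k be integers, let H = { w ∈ (ℤ/p^kℤ)^t : p^{k-s_i} divides w_i for all i }, and let M ∈ GL(t, ℤ/p^kℤ) be invertible. Then { wM : w ∈ H } = H if and only if for all indices i > j one has d_p(M_{i,j}) ≥ s_i - s_j. -/
open Matrix

/-!
Write `H = {w | ∀ i, d i ∣ w i}`. Testing on the vectors `d i • e i` shows that `H M ⊆ H` holds if
and only if `d j ∣ d i * M i j` for all `i` and `j`. Multiplication by an invertible `M` induces a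
surjective endomorphism of the finitely generated module `(ι → R) ⧸ H`; such an endomorphism is
injective, so `H M ⊆ H` already forces `H M = H`. For `d i = p ^ (k - s i)`, the condition
`d j ∣ d i * M i j` becomes `p ^ (s i - s j) ∣ M i j` after cancelling `p ^ (k - s i)`.
-/

variable {R ι κ : Type*}

theorem map_eq_self_of_map_le_of_surjective {V : Type*} [Ring R] [OrzechProperty R]
    [AddCommGroup V] [Module R V] [Module.Finite R V] {f : V →ₗ[R] V}
    (hf : Function.Surjective f) {N : Submodule R V} (hN : N.map f ≤ N) : N.map f = N := by
  have hN' : N ≤ N.comap f := Submodule.map_le_iff_le_comap.mp hN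
  have hsurj : Function.Surjective (N.mapQ N f hN') := fun y ↦ by
    obtain ⟨v, rfl⟩ := N.mkQ_surjective y
    obtain ⟨w, rfl⟩ := hf v
    exact ⟨N.mkQ w, rfl⟩
  have hinj := OrzechProperty.injective_of_surjective_endomorphism _ hsurj
  have hcomap : N.comap f = N := by
    refine le_antisymm (fun v hv ↦ ?_) hN'
    rw [← Submodule.Quotient.mk_eq_zero N]
    refine hinj ?_
    rw [Submodule.mapQ_apply, map_zero]
    exact (Submodule.Quotient.mk_eq_zero N).mpr hv
  calc N.map f = (N.comap f).map f := by rw [hcomap]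
    _ = N := Submodule.map_comap_eq_of_surjective hf N

section DivisibleVectors

variable [CommRing R]

/-- The submodule `H` of vectors whose `i`-th coordinate is a multiple of `d i` for every `i`. -/
def divisibleVectors (d : ι → R) : Submodule R (ι → R) :=
  Submodule.pi Set.univ fun i ↦ Ideal.span {d i}

theorem mem_divisibleVectors {d w : ι → R} : w ∈ divisibleVectors d ↔ ∀ i, d i ∣ w i := by
  simp only [divisibleVectors, Submodule.mem_pi, Set.mem_univ, true_implies,
    Ideal.mem_span_singleton]

theorem map_vecMulLinear_divisibleVectors_le_iff [Fintype ι] {d : ι → R} {e : κ → R}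
    {M : Matrix ι κ R} :
    (divisibleVectors d).map M.vecMulLinear ≤ divisibleVectors e ↔
      ∀ i j, e j ∣ d i * M i j := by
  classical
  rw [Submodule.map_le_iff_le_comap]
  simp only [SetLike.le_def, Submodule.mem_comap, vecMulLinear_apply, mem_divisibleVectors]
  constructor
  · intro h i j
    have hsingle : ∀ l, d l ∣ (Pi.single i (d i) : ι → R) l := fun l ↦ by
      obtain rfl | hl := eq_or_ne l i
      · rw [Pi.single_eq_same]
      · simp only [Pi.single_eq_of_ne hl, dvd_zero]
    simpa only [single_vecMul, Pi.smul_apply, row_apply, smul_eq_mul] using h hsingle j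
  · intro h w hw j
    exact Finset.dvd_sum fun i _ ↦ (h i j).trans (mul_dvd_mul_right (hw i) _)

theorem map_vecMulLinear_divisibleVectors_eq_iff [Fintype ι] [DecidableEq ι] {d : ι → R}
    {M : Matrix ι ι R} (hM : IsUnit M) :
    (divisibleVectors d).map M.vecMulLinear = divisibleVectors d ↔
      ∀ i j, d j ∣ d i * M i j := by
  rw [← map_vecMulLinear_divisibleVectors_le_iff]
  exact ⟨le_of_eq, map_eq_self_of_map_le_of_surjective (vecMul_surjective_iff_isUnit.mpr hM)⟩

end DivisibleVectors

theorem pow_sub_dvd_pow_sub_mul_iff [CommMonoid R] {π : R} {k m n : ℕ}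
    (hπ : ∀ a b x, a + b ≤ k → π ^ (a + b) ∣ π ^ a * x → π ^ b ∣ x)
    (hm : m ≤ k) (x : R) :
    π ^ (k - n) ∣ π ^ (k - m) * x ↔ π ^ (m - n) ∣ x := by
  obtain hmn | hnm := le_total m n
  · have hle : k - n ≤ k - m := by omega
    simp only [Nat.sub_eq_zero_of_le hmn, pow_zero, one_dvd, iff_true]
    exact (pow_dvd_pow π hle).mul_right x
  · have hsplit : k - n = (k - m) + (m - n) := by omega
    rw [hsplit]
    refine ⟨hπ _ _ x (by omega), fun h ↦ ?_⟩
    rw [pow_add]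
    exact mul_dvd_mul_left _ h

theorem forall_pow_sub_dvd_iff_of_monotone [Monoid R] [LinearOrder ι] {s : ι → ℕ}
    (hs : Monotone s) (π : R) (M : Matrix ι ι R) :
    (∀ i j, π ^ (s i - s j) ∣ M i j) ↔ ∀ i j, j < i → π ^ (s i - s j) ∣ M i j := by
  refine ⟨fun h i j _ ↦ h i j, fun h i j ↦ ?_⟩
  obtain hij | hji := le_or_gt i j
  · simp only [Nat.sub_eq_zero_of_le (hs hij), pow_zero, one_dvd]
  · exact h i j hji

theorem natCast_dvd_of_natCast_mul_dvd_natCast_mul {n a b : ℕ} (ha : a ≠ 0) (hab : a * b ∣ n)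
    {x : ZMod n} (h : (a * b : ZMod n) ∣ a * x) : (b : ZMod n) ∣ x := by
  obtain ⟨c, hc⟩ := h
  obtain ⟨x, rfl⟩ := ZMod.intCast_surjective x
  obtain ⟨c, rfl⟩ := ZMod.intCast_surjective c
  have hn : (n : ℤ) ∣ a * b * c - a * x := by
    rw [← ZMod.intCast_eq_intCast_iff_dvd_sub]
    exact_mod_cast hc
  have habx : (a * b : ℤ) ∣ a * x :=
    (dvd_sub_right (dvd_mul_right _ c)).mp ((by exact_mod_cast hab : (a * b : ℤ) ∣ n).trans hn)
  have hbx : (b : ℤ) ∣ x := Int.dvd_of_mul_dvd_mul_left (by exact_mod_cast ha) habx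
  simpa only [map_natCast, eq_intCast] using map_dvd (Int.castRingHom (ZMod n)) hbx

theorem natCast_pow_dvd_of_pow_add_dvd_pow_mul {p k : ℕ} (hp : p ≠ 0) (a b : ℕ) (x : ZMod (p ^ k))
    (hab : a + b ≤ k) (h : (p : ZMod (p ^ k)) ^ (a + b) ∣ (p : ZMod (p ^ k)) ^ a * x) :
    (p : ZMod (p ^ k)) ^ b ∣ x := by
  have hdvd : p ^ a * p ^ b ∣ p ^ k := pow_add p a b ▸ pow_dvd_pow p hab
  rw [pow_add] at h
  exact_mod_cast natCast_dvd_of_natCast_mul_dvd_natCast_mul (pow_ne_zero a hp) hdvd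
    (by exact_mod_cast h)

theorem image_vecMul_eq_iff_dvd_general [CommRing R] [Fintype ι] [DecidableEq ι] {π : R} {k : ℕ}
    (hπ : ∀ a b x, a + b ≤ k → π ^ (a + b) ∣ π ^ a * x → π ^ b ∣ x)
    (s : ι → ℕ) (hsk : ∀ i, s i ≤ k) (M : Matrix ι ι R) (hM : IsUnit M.det) :
    ((fun w : ι → R ↦ w ᵥ* M) '' {w | ∀ i, π ^ (k - s i) ∣ w i} =
      {w | ∀ i, π ^ (k - s i) ∣ w i}) ↔
    ∀ i j, π ^ (s i - s j) ∣ M i j := by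
  let H : Submodule R (ι → R) := divisibleVectors fun i ↦ π ^ (k - s i)
  have hH : {w : ι → R | ∀ i, π ^ (k - s i) ∣ w i} = H :=
    Set.ext fun _ ↦ mem_divisibleVectors.symm
  calc _ ↔ H.map M.vecMulLinear = H := by
        rw [hH, ← SetLike.coe_set_eq (p := H.map _), Submodule.map_coe]; rfl
    _ ↔ ∀ i j, π ^ (k - s j) ∣ π ^ (k - s i) * M i j :=
        map_vecMulLinear_divisibleVectors_eq_iff ((isUnit_iff_isUnit_det M).mpr hM)
    _ ↔ ∀ i j, π ^ (s i - s j) ∣ M i j :=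
        forall₂_congr fun i _ ↦ pow_sub_dvd_pow_sub_mul_iff hπ (hsk i) _

/-- Let `0 ≤ s_1 ≤ ⋯ ≤ s_t ≤ k` be integers, let
`H = { w ∈ (ℤ/p^k)^t : p^{k-s_i} ∣ w_i for all i }`, and let
`M ∈ GL(t, ℤ/p^k)` be invertible.  Then `{ wM : w ∈ H } = H` if and only
if for all indices `i > j` one has `d_p(M_{i,j}) ≥ s_i - s_j`, i.e.
`p^{s_i - s_j} ∣ M_{i,j}`. -/
theorem image_vecMul_eq_iff_dvd {p k t : ℕ} (hp : p.Prime) (hk : 1 ≤ k)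
    (s : Fin t → ℕ) (hmono : Monotone s) (hsk : ∀ i, s i ≤ k)
    (M : Matrix (Fin t) (Fin t) (ZMod (p ^ k))) (hM : IsUnit M.det) :
    ((fun w : Fin t → ZMod (p ^ k) => w ᵥ* M) ''
        {w : Fin t → ZMod (p ^ k) |
          ∀ i : Fin t, (p : ZMod (p ^ k)) ^ (k - s i) ∣ w i} =
      {w : Fin t → ZMod (p ^ k) |
        ∀ i : Fin t, (p : ZMod (p ^ k)) ^ (k - s i) ∣ w i}) ↔
    ∀ i j : Fin t, (j : ℕ) < (i : ℕ) →
      (p : ZMod (p ^ k)) ^ (s i - s j) ∣ M i j := by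
  exact (image_vecMul_eq_iff_dvd_general (natCast_pow_dvd_of_pow_add_dvd_pow_mul hp.ne_zero)
    s hsk M hM).trans (forall_pow_sub_dvd_iff_of_monotone hmono _ M)
end

section
/- Let B ∈ M_{6×3}(ℤ/4ℤ) have rows (2,2,1), (2,0,2), (2,2,2), (2,0,3), (2,2,0), (2,0,0), and let S₄ ∈ M_6(ℤ) be the permutation matrix with rows (0,0,0,1,0,0), (0,0,0,0,1,0), (0,0,0,0,0,1), (1,0,0,0,0,0), (0,1,0,0,0,0), (0,0,1,0,0,0). Then Z(S₄B) = Z(B) in (ℤ/4ℤ)^6. -/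
/-! Permuting the rows of `B` by `S₄` has the same effect as applying one automorphism of the
voltage group `ℤ/2 × ℤ/2 × ℤ/4` to every row, that is, as multiplying `B` on the right by an
invertible matrix; and such a multiplication does not change the linear relations between rows. -/

open Matrix

section ZeroSet

variable {R m n p : Type*} [Fintype m]

/-- The zero set `Z(X)` of a matrix `X`: the row vectors `w` with `w X = 0`, that is, the linear
relations between the rows of `X`. -/
def zeroSet [NonUnitalNonAssocSemiring R] (X : Matrix m n R) : Set (m → R) :=
  {w | w ᵥ* X = 0}

theorem zeroSet_mul_of_injective_vecMul [NonUnitalSemiring R] [Fintype n] (X : Matrix m n R)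
    {P : Matrix n p R} (hP : Function.Injective P.vecMul) : zeroSet (X * P) = zeroSet X := by
  ext w
  calc w ᵥ* (X * P) = 0
    _ ↔ w ᵥ* X ᵥ* P = 0 ᵥ* P := by rw [vecMul_vecMul, zero_vecMul]
    _ ↔ w ᵥ* X = 0 := hP.eq_iff

theorem zeroSet_mul_of_isUnit [Semiring R] [Fintype n] [DecidableEq n] (X : Matrix m n R)
    {P : Matrix n n R} (hP : IsUnit P) : zeroSet (X * P) = zeroSet X :=
  zeroSet_mul_of_injective_vecMul X (vecMul_injective_of_isUnit hP)

end ZeroSet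

namespace PetersenCovering

/-- The voltage matrix `B` of the covering: an element `(a, b, c)` of the voltage group
`ℤ/2 × ℤ/2 × ℤ/4` is encoded as the row `(2a, 2b, c)` over `ℤ/4`. -/
def voltageMatrix : Matrix (Fin 6) (Fin 3) (ZMod 4) :=
  !![2, 2, 1;
     2, 0, 2;
     2, 2, 2;
     2, 0, 3;
     2, 2, 0;
     2, 0, 0]

/-- The matrix `S₄` of the automorphism `α₄`: it exchanges the first three coordinates with the
last three. -/
def alphaFourMatrix : Matrix (Fin 6) (Fin 6) ℤ :=
  !![0, 0, 0, 1, 0, 0;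
     0, 0, 0, 0, 1, 0;
     0, 0, 0, 0, 0, 1;
     1, 0, 0, 0, 0, 0;
     0, 1, 0, 0, 0, 0;
     0, 0, 1, 0, 0, 0]

/-- The automorphism `(a, b, c) ↦ (a, a + b, 2a + c)` of the voltage group that matches `α₄`, as a
matrix acting from the right on the encoded rows `(2a, 2b, c)`. -/
def voltageAutMatrix : Matrix (Fin 3) (Fin 3) (ZMod 4) :=
  !![1, 1, 1;
     0, 1, 0;
     0, 0, 1]

theorem det_voltageAutMatrix : voltageAutMatrix.det = 1 := by
  simp [voltageAutMatrix, det_fin_three]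

theorem isUnit_voltageAutMatrix : IsUnit voltageAutMatrix := by
  rw [isUnit_iff_isUnit_det, det_voltageAutMatrix]
  exact isUnit_one

theorem alphaFourMatrix_mul_voltageMatrix :
    alphaFourMatrix.map (Int.cast : ℤ → ZMod 4) * voltageMatrix =
      voltageMatrix * voltageAutMatrix := by
  decide

end PetersenCovering

open PetersenCovering

/-- The automorphism α₄ of the Petersen graph in Example 4.2 lifts: Z(S₄B) = Z(B) in (ℤ/4)⁶. -/
theorem zeroSet_eq_example_alpha4 (B : Matrix (Fin 6) (Fin 3) (ZMod 4))
    (hB : B = !![2,2,1; 2,0,2; 2,2,2; 2,0,3; 2,2,0; 2,0,0])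
    (S : Matrix (Fin 6) (Fin 6) ℤ)
    (hS : S = !![0,0,0,1,0,0; 0,0,0,0,1,0; 0,0,0,0,0,1; 1,0,0,0,0,0; 0,1,0,0,0,0; 0,0,1,0,0,0]) :
    {w : Fin 6 → ZMod 4 | w ᵥ* (S.map (Int.cast : ℤ → ZMod 4) * B) = 0} =
      {w : Fin 6 → ZMod 4 | w ᵥ* B = 0} := by
  obtain rfl : B = voltageMatrix := hB
  obtain rfl : S = alphaFourMatrix := hS
  calc zeroSet (alphaFourMatrix.map (Int.cast : ℤ → ZMod 4) * voltageMatrix)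
    _ = zeroSet (voltageMatrix * voltageAutMatrix) := by rw [alphaFourMatrix_mul_voltageMatrix]
    _ = zeroSet voltageMatrix := zeroSet_mul_of_isUnit voltageMatrix isUnit_voltageAutMatrix
end
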